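/- Let d ≥ 2. The 0-fractional perimeter 𝒫^0 satisfies assumption (H): for every L > 0 and δ > 0 there exist ε₀ ∈ (0,1) and C(δ,L) > 0 such that for every E ∈ 𝔠_L with osc_{𝕋^{d−1}} f_E ≥ δ one has 𝒫^0(E) − 𝒫^0(E_ε) ≥ C(δ,L) ε for all 0 < ε ≤ ε₀. -/

import Mathlib

open MeasureTheory Filter Set
open scoped ENNReal

noncomputable section

/-- The flat torus `𝕋^{d-1}`. -/
abbrev Torus (d : ℕ) : Type := Fin (d-1) → AddCircle (1:ℝ)

/-- The periodic strip `𝕋^{d-1} × ℝ`. -/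
abbrev Cyl (d : ℕ) : Type := Torus d × ℝ

/-- The subgraph of a function `g : 𝕋^{d-1} → ℝ`. -/
def subgraph (d : ℕ) (g : Torus d → ℝ) : Set (Cyl d) := {x | x.2 ≤ g x.1}

/-- The class `𝔠_L` of periodic `L`-Lipschitz subgraphs. -/
def LipClass (d : ℕ) (L : ℝ) : Set (Set (Cyl d)) :=
  {E | ∃ g : Torus d → ℝ, LipschitzWith (Real.toNNReal L) g ∧ E = subgraph d g}

/-- The slab `𝕊^d_R = 𝕋^{d-1} × (-R, R)`. -/
def SlabR (d : ℕ) (R : ℝ) : Set (Cyl d) := {x | -R < x.2 ∧ x.2 < R}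

/-- The class `𝔐_R` of measurable sets squeezed between two halfspaces. -/
def MR (d : ℕ) (R : ℝ) : Set (Set (Cyl d)) :=
  {E | MeasurableSet E ∧ {x : Cyl d | x.2 < -R} ⊆ E ∧ E ⊆ {x : Cyl d | x.2 < R}}

/-- The periodic halfspace `H_λ = 𝕋^{d-1} × (-∞, λ)`. -/
def halfspace (d : ℕ) (lam : ℝ) : Set (Cyl d) := {x | x.2 < lam}

/-- Translation of `𝕋^{d-1} × ℝ` by a vector `τ ∈ ℝ^d = ℝ^{d-1} × ℝ`,
acting through the quotient. -/
def translCyl (d : ℕ) (τ : (Fin (d-1) → ℝ) × ℝ) (x : Cyl d) : Cyl d :=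
  (fun i => x.1 i + (τ.1 i : AddCircle (1:ℝ)), x.2 + τ.2)

/-- The periodic norm `‖ξ‖_♯ = (|ξ_d|² + min_{z'∈ℤ^{d-1}} |ξ̃' + z'|²)^{1/2}`. -/
def pnorm (d : ℕ) (ξ : Cyl d) : ℝ := Real.sqrt (ξ.2 ^ 2 + ∑ i, ‖ξ.1 i‖ ^ 2)

/-- The Riesz interaction `𝒥^α(E,F) = ∫_E ∫_F ‖x-y‖_♯^{-(d-α)} dy dx`. -/
def Jalpha (d : ℕ) (α : ℝ) (E F : Set (Cyl d)) : ℝ≥0∞ :=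
  ∫⁻ x in E, ∫⁻ y in F, (ENNReal.ofReal (pnorm d (x - y))) ^ (-((d : ℝ) - α)) ∂volume ∂volume

/-- The slab `𝕊^d_{R₁,R₂} = 𝕋^{d-1} × (R₁, R₂)`. -/
def slab2 (d : ℕ) (R₁ R₂ : ℝ) : Set (Cyl d) := {x | R₁ < x.2 ∧ x.2 < R₂}

/-- `𝒫^α_{R₁,R₂}(E) = 𝒥^α(𝕊,𝕊) - 𝒥^α(E∩𝕊, E∩𝕊)`. -/
def PalphaSlab (d : ℕ) (α R₁ R₂ : ℝ) (E : Set (Cyl d)) : ℝ≥0∞ :=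
  Jalpha d α (slab2 d R₁ R₂) (slab2 d R₁ R₂)
    - Jalpha d α (E ∩ slab2 d R₁ R₂) (E ∩ slab2 d R₁ R₂)

/-- `ρ_E < +∞`, i.e. `E` is contained in some halfspace `𝕋^{d-1} × (-∞, ρ)`. -/
def BddTop (d : ℕ) (E : Set (Cyl d)) : Prop := ∃ ρ : ℝ, E ⊆ {x : Cyl d | x.2 < ρ}

/-- `ρ_E = inf {ρ : E ⊆ 𝕋^{d-1} × (-∞, ρ)}`. -/
def rhoSup (d : ℕ) (E : Set (Cyl d)) : ℝ := sInf {ρ : ℝ | E ⊆ {x : Cyl d | x.2 < ρ}}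

open Classical in
/-- The `α`-Riesz perimeter `𝒫^α` (the limits in `R` exist by monotonicity, so they
coincide with the `limsup`). -/
def Palpha (d : ℕ) (α : ℝ) (E : Set (Cyl d)) : ℝ≥0∞ :=
  if E = ∅ then 0
  else if BddTop d E then limsup (fun R : ℝ => PalphaSlab d α (-R) (rhoSup d E) E) atTop
  else limsup (fun R : ℝ => PalphaSlab d α (-R) R E) atTop

/-- Oscillation of a function on the torus. -/
def osc (d : ℕ) (g : Torus d → ℝ) : ℝ := (⨆ x, g x) - (⨅ x, g x)

open Classical in
/-- Short-range part `𝒢^0(E,F)` of the 0-fractional perimeter. -/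
def G0 (d : ℕ) (E F : Set (Cyl d)) : ℝ≥0∞ :=
  ∫⁻ x in E, ∫⁻ y in F,
    (if pnorm d (x - y) < 1 then (ENNReal.ofReal (pnorm d (x - y))) ^ (-(d : ℝ)) else 0)
      ∂volume ∂volume

open Classical in
/-- Long-range interaction `𝒥^0(E,F)`. -/
def J0 (d : ℕ) (E F : Set (Cyl d)) : ℝ≥0∞ :=
  ∫⁻ x in E, ∫⁻ y in F,
    (if 1 < pnorm d (x - y) then (ENNReal.ofReal (pnorm d (x - y))) ^ (-(d : ℝ)) else 0)
      ∂volume ∂volume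

/-- `𝒬^0_{R₁,R₂}(E) = 𝒥^0(𝕊,𝕊) - 𝒥^0(E∩𝕊, E∩𝕊)`. -/
def Q0 (d : ℕ) (R₁ R₂ : ℝ) (E : Set (Cyl d)) : ℝ≥0∞ :=
  J0 d (slab2 d R₁ R₂) (slab2 d R₁ R₂) - J0 d (E ∩ slab2 d R₁ R₂) (E ∩ slab2 d R₁ R₂)

open Classical in
/-- The 0-fractional perimeter `𝒫^0`. -/
def P0 (d : ℕ) (E : Set (Cyl d)) : ℝ≥0∞ :=
  if E = ∅ then 0
  else G0 d E Eᶜ +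
    (if BddTop d E then limsup (fun R : ℝ => Q0 d (-R) (rhoSup d E) E) atTop
     else limsup (fun R : ℝ => Q0 d (-R) R E) atTop)

instance cylInv (d : ℕ) : (volume : Measure (Cyl d)).IsAddLeftInvariant := by
  constructor
  intro a
  exact ((measurePreserving_add_left (volume : Measure (Torus d)) a.1).prod
    (measurePreserving_add_left (volume : Measure ℝ) a.2)).map_eq

instance circNeg : (volume : Measure (AddCircle (1:ℝ))).IsNegInvariant := by
  infer_instance

instance torusNeg (d : ℕ) : (volume : Measure (Torus d)).IsNegInvariant := by
  rw [volume_pi]; infer_instance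

instance cylNeg (d : ℕ) : (volume : Measure (Cyl d)).IsNegInvariant := by
  constructor
  exact ((Measure.measurePreserving_neg (volume : Measure (Torus d))).prod
    (Measure.measurePreserving_neg (volume : Measure ℝ))).map_eq

/-- short range kernel -/
def KK (d : ℕ) (ξ : Cyl d) : ℝ≥0∞ :=
  open Classical in
  if pnorm d ξ < 1 then (ENNReal.ofReal (pnorm d ξ)) ^ (-(d : ℝ)) else 0

lemma pnorm_meas (d : ℕ) : Continuous (pnorm d) := by
  unfold pnorm; fun_prop

lemma KK_meas (d : ℕ) : Measurable (KK d) := by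
  unfold KK
  refine Measurable.ite ?_ ?_ measurable_const
  · exact (isOpen_Iio.preimage (pnorm_meas d)).measurableSet
  · exact ((pnorm_meas d).measurable.ennreal_ofReal).pow_const _

lemma KK_neg (d : ℕ) (ξ : Cyl d) : KK d (-ξ) = KK d ξ := by
  have : pnorm d (-ξ) = pnorm d ξ := by simp [pnorm]
  simp [KK, this]

lemma KK_refl (d : ℕ) (ξ : Cyl d) : KK d (ξ.1, -ξ.2) = KK d ξ := by
  have : pnorm d (ξ.1, -ξ.2) = pnorm d ξ := by simp [pnorm]
  simp [KK, this]

lemma KK_ge (d : ℕ) (ξ : Cyl d) (h : pnorm d ξ < 1) : 1 ≤ KK d ξ := by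
  simp only [KK, h, if_true]
  rw [ENNReal.rpow_neg]
  rw [ENNReal.one_le_inv]
  apply ENNReal.rpow_le_one
  · rw [ENNReal.ofReal_le_one]; exact h.le
  · positivity

/-- volume of the set difference -/
def VV (d : ℕ) (g : Torus d → ℝ) (ξ : Cyl d) : ℝ≥0∞ :=
  ∫⁻ x : Torus d, ENNReal.ofReal (g x - g (x - ξ.1) - ξ.2)

lemma VV_meas (d : ℕ) (g : Torus d → ℝ) (hg : Continuous g) : Measurable (VV d g) := by
  unfold VV
  apply Measurable.lintegral_prod_right' (f := fun (p : Cyl d × Torus d) => ENNReal.ofReal (g p.2 - g (p.2 - p.1.1) - p.1.2))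
  apply Measurable.ennreal_ofReal
  apply Continuous.measurable
  fun_prop

lemma sub_meas (d : ℕ) (g : Torus d → ℝ) (hg : Continuous g) : MeasurableSet (subgraph d g) := by
  apply IsClosed.measurableSet
  exact isClosed_le continuous_snd (hg.comp continuous_fst)

lemma VV_eq (d : ℕ) (g : Torus d → ℝ) (hg : Continuous g) (ξ : Cyl d) :
    ∫⁻ x : Cyl d, (subgraph d g).indicator (fun x => (subgraph d g)ᶜ.indicator 1 (x - ξ)) x
      = VV d g ξ := by
  have hE := sub_meas d g hg
  have hm : Measurable (fun x : Cyl d =>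
      (subgraph d g).indicator (fun x => (subgraph d g)ᶜ.indicator (1 : Cyl d → ℝ≥0∞) (x - ξ)) x) := by
    apply Measurable.indicator _ hE
    exact (measurable_one.indicator hE.compl).comp (measurable_id.sub_const ξ)
  rw [Measure.volume_eq_prod, lintegral_prod _ hm.aemeasurable]
  unfold VV
  apply lintegral_congr
  intro x
  have : ∀ s : ℝ, (subgraph d g).indicator (fun x => (subgraph d g)ᶜ.indicator (1 : Cyl d → ℝ≥0∞) (x - ξ)) (x, s)
      = (Ioc (g (x - ξ.1) + ξ.2) (g x)).indicator 1 s := by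
    intro s
    by_cases h1 : s ≤ g x <;> by_cases h2 : g (x - ξ.1) + ξ.2 < s <;>
      simp [indicator, subgraph, h1, h2, lt_sub_iff_add_lt]
  simp_rw [this]
  rw [lintegral_indicator_one measurableSet_Ioc, Real.volume_Ioc]
  congr 1; ring

lemma G0_eq (d : ℕ) (g : Torus d → ℝ) (hg : Continuous g) :
    G0 d (subgraph d g) (subgraph d g)ᶜ = ∫⁻ ξ : Cyl d, KK d ξ * VV d g ξ := by
  have hE := sub_meas d g hg
  have h1 : G0 d (subgraph d g) (subgraph d g)ᶜ
     = ∫⁻ x : Cyl d, ∫⁻ ξ : Cyl d, KK d ξ *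
        (subgraph d g).indicator (fun x => (subgraph d g)ᶜ.indicator 1 (x - ξ)) x := by
    unfold G0
    rw [← lintegral_indicator hE]
    apply lintegral_congr
    intro x
    by_cases hx : x ∈ subgraph d g
    · simp only [indicator_of_mem hx]
      rw [← lintegral_indicator hE.compl]
      rw [← lintegral_sub_left_eq_self _ x]
      apply lintegral_congr
      intro ξ
      by_cases hy : x - ξ ∈ (subgraph d g)ᶜ
      · rw [indicator_of_mem hy, indicator_of_mem hy]
        simp [KK]
      · rw [indicator_of_notMem hy, indicator_of_notMem hy]; simp
    · simp [indicator_of_notMem hx]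
  rw [h1, lintegral_lintegral_swap]
  · apply lintegral_congr
    intro ξ
    rw [lintegral_const_mul, VV_eq d g hg]
    apply Measurable.indicator _ hE
    exact (measurable_one.indicator hE.compl).comp (measurable_id.sub_const ξ)
  · apply Measurable.aemeasurable
    apply Measurable.mul
    · exact (KK_meas d).comp measurable_snd
    · have : (fun p : Cyl d × Cyl d => (subgraph d g).indicator (fun x => (subgraph d g)ᶜ.indicator (1 : Cyl d → ℝ≥0∞) (x - p.2)) p.1)
        = (Prod.fst ⁻¹' (subgraph d g)).indicator (fun p : Cyl d × Cyl d => (subgraph d g)ᶜ.indicator (1 : Cyl d → ℝ≥0∞) (p.1 - p.2)) := by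
        ext p; rfl
      show Measurable (fun p : Cyl d × Cyl d => (subgraph d g).indicator (fun x => (subgraph d g)ᶜ.indicator (1 : Cyl d → ℝ≥0∞) (x - p.2)) p.1)
      rw [this]
      apply Measurable.indicator _ (measurable_fst hE)
      exact (measurable_one.indicator hE.compl).comp (measurable_fst.sub measurable_snd)

/-- symmetrised density -/
def phi (a h : ℝ) : ℝ := |a - h| + |a + h|

lemma VV_neg (d : ℕ) (g : Torus d → ℝ) (ξ : Cyl d) :
    VV d g (-ξ) = ∫⁻ x : Torus d, ENNReal.ofReal (ξ.2 - (g x - g (x - ξ.1))) := by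
  unfold VV
  rw [← lintegral_sub_right_eq_self _ ξ.1]
  apply lintegral_congr
  intro x
  congr 1
  simp
  ring

lemma VV_sum (d : ℕ) (g : Torus d → ℝ) (hg : Continuous g) (ξ : Cyl d) :
    VV d g ξ + VV d g (-ξ) + (VV d g (ξ.1, -ξ.2) + VV d g (-(ξ.1, -ξ.2)))
     = ∫⁻ x : Torus d, ENNReal.ofReal (phi (g x - g (x - ξ.1)) ξ.2) := by
  rw [VV_neg, VV_neg]
  unfold VV
  have key : ∀ b : ℝ, ENNReal.ofReal |b| = ENNReal.ofReal b + ENNReal.ofReal (-b) := by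
    intro b
    rcases le_total 0 b with h | h
    · rw [abs_of_nonneg h, ENNReal.ofReal_of_nonpos (p := -b) (by linarith), add_zero]
    · rw [abs_of_nonpos h, ENNReal.ofReal_of_nonpos h, zero_add]
  have m : ∀ f : Torus d → ℝ, Continuous f → Measurable (fun x => ENNReal.ofReal (f x)) :=
    fun f hf => hf.measurable.ennreal_ofReal
  rw [← lintegral_add_left (m _ (by fun_prop)), ← lintegral_add_left (m _ (by fun_prop)),
    ← lintegral_add_left (by
      exact (m _ (by fun_prop)).add (m _ (by fun_prop)))]
  apply lintegral_congr
  intro x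
  unfold phi
  rw [ENNReal.ofReal_add (abs_nonneg _) (abs_nonneg _), key, key]
  simp only
  congr 2
  · congr 1; ring
  · congr 1; ring
  · congr 1; ring

lemma four_G0 (d : ℕ) (g : Torus d → ℝ) (hg : Continuous g) :
    4 * G0 d (subgraph d g) (subgraph d g)ᶜ =
      ∫⁻ ξ : Cyl d, KK d ξ * ∫⁻ x : Torus d, ENNReal.ofReal (phi (g x - g (x - ξ.1)) ξ.2) := by
  rw [G0_eq d g hg]
  have hF : Measurable (fun ξ => KK d ξ * VV d g ξ) := (KK_meas d).mul (VV_meas d g hg)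
  set F : Cyl d → ℝ≥0∞ := fun ξ => KK d ξ * VV d g ξ with hFd
  have hs : MeasurePreserving (fun ξ : Cyl d => ((ξ.1, -ξ.2) : Cyl d)) volume volume := by
    exact (MeasurePreserving.id (volume : Measure (Torus d))).prod (Measure.measurePreserving_neg (volume : Measure ℝ))
  have h1 : ∫⁻ ξ, F (-ξ) = ∫⁻ ξ, F ξ := lintegral_neg_eq_self F
  have h2 : ∫⁻ ξ : Cyl d, F (ξ.1, -ξ.2) = ∫⁻ ξ, F ξ := hs.lintegral_comp hF
  have h3 : ∫⁻ ξ : Cyl d, F (-(ξ.1, -ξ.2)) = ∫⁻ ξ, F ξ := by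
    rw [← h1]
    exact hs.lintegral_comp (f := fun ξ => F (-ξ)) (hF.comp measurable_neg)
  calc 4 * ∫⁻ ξ, F ξ = (∫⁻ ξ, F ξ) + (∫⁻ ξ, F (-ξ)) + ((∫⁻ ξ : Cyl d, F (ξ.1, -ξ.2)) + ∫⁻ ξ : Cyl d, F (-(ξ.1, -ξ.2))) := by
        rw [h1, h2, h3]; ring
    _ = ∫⁻ ξ : Cyl d, (F ξ + F (-ξ) + (F (ξ.1, -ξ.2) + F (-(ξ.1, -ξ.2)))) := by
        rw [← lintegral_add_left hF, ← lintegral_add_left (f := fun ξ : Cyl d => F (ξ.1, -ξ.2)) (hF.comp hs.measurable),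
          ← lintegral_add_left (f := fun ξ : Cyl d => F ξ + F (-ξ)) (hF.add (hF.comp measurable_neg))]
    _ = _ := by
        apply lintegral_congr
        intro ξ
        rw [← VV_sum d g hg]
        simp only [hFd, KK_neg, KK_refl]
        ring

lemma phi_mono (a h c : ℝ) (hc : 0 ≤ c) (hc1 : c ≤ 1) : phi (c * a) h ≤ phi a h := by
  unfold phi
  have e : ∀ a h : ℝ, |a - h| + |a + h| = 2 * max |a| |h| := by
    intro a h
    rcases abs_cases (a-h) with h1 | h1 <;> rcases abs_cases (a+h) with h2 | h2 <;>
    rcases abs_cases a with h3 | h3 <;> rcases abs_cases h with h4 | h4 <;>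
    rcases max_cases |a| |h| with h5 | h5 <;> linarith
  rw [e, e, abs_mul, abs_of_nonneg hc]
  have : c * |a| ≤ |a| := by nlinarith [abs_nonneg a]
  gcongr

lemma phi_strict (a h c b : ℝ) (hc : 1/2 ≤ c) (hc1 : c ≤ 1) (hb : b ≤ a) (hb0 : 0 ≤ b) (hh : |h| ≤ b / 2) :
    phi (c * a) h + 2 * (1 - c) * b ≤ phi a h := by
  unfold phi
  obtain ⟨h1, h2⟩ := abs_le.1 hh
  have : b / 2 ≤ c * a := by nlinarith
  rw [abs_of_nonneg (a := c * a - h) (by linarith), abs_of_nonneg (a := c * a + h) (by linarith),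
    abs_of_nonneg (a := a - h) (by linarith), abs_of_nonneg (a := a + h) (by linarith)]
  nlinarith

lemma chain (d : ℕ) (g : Torus d → ℝ) (hg : Continuous g) (δ : ℝ) (hδ : δ ≤ osc d g)
    (N : ℕ) (hN : 0 < N) :
    ∃ p q : Torus d, ‖p - q‖ ≤ 1 / N ∧ δ / N ≤ g p - g q := by
  obtain ⟨P, hP⟩ := (isCompact_univ (X := Torus d)).exists_isMaxOn univ_nonempty hg.continuousOn
  obtain ⟨Q, hQ⟩ := (isCompact_univ (X := Torus d)).exists_isMinOn univ_nonempty hg.continuousOn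
  have hPQ : δ ≤ g P - g Q := by
    refine hδ.trans ?_
    unfold osc
    have a1 : (⨆ x, g x) ≤ g P := ciSup_le fun x => hP.2 (mem_univ x)
    have a2 : g Q ≤ (⨅ x, g x) := le_ciInf fun x => hQ.2 (mem_univ x)
    linarith
  have ht : ∀ i, ∃ t : ℝ, 0 ≤ t ∧ t ≤ 1 ∧ (t : AddCircle (1:ℝ)) = Q i - P i := by
    intro i
    refine ⟨AddCircle.equivIco 1 0 (Q i - P i), ?_, ?_, AddCircle.coe_equivIco⟩
    · exact (AddCircle.equivIco 1 0 (Q i - P i)).2.1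
    · have := (AddCircle.equivIco 1 0 (Q i - P i)).2.2; linarith
  choose t t0 t1 te using ht
  let r : ℕ → Torus d := fun k i => P i + (((k / N : ℝ) * t i : ℝ) : AddCircle (1:ℝ))
  have hN' : (0:ℝ) < N := by exact_mod_cast hN
  by_contra! hcon
  have hstep : ∀ k, g (r k) - g (r (k+1)) < δ / N := by
    intro k
    apply hcon
    rw [pi_norm_le_iff_of_nonneg (by positivity)]
    intro i
    have : (r k - r (k+1)) i = ((-(t i / N) : ℝ) : AddCircle (1:ℝ)) := by
      simp only [r, Pi.sub_apply, add_sub_add_left_eq_sub]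
      rw [← AddCircle.coe_sub]
      congr 1; push_cast; field_simp; ring
    rw [this]
    refine (QuotientAddGroup.norm_mk_le_norm (S := AddSubgroup.zmultiples (1:ℝ))).trans ?_
    rw [norm_neg, Real.norm_of_nonneg (div_nonneg (t0 i) hN'.le)]
    gcongr
    exact t1 i
  have hsum : ∑ k ∈ Finset.range N, (g (r k) - g (r (k+1))) = g P - g Q := by
    rw [Finset.sum_range_sub']
    have e0 : r 0 = P := by ext i; simp [r]
    have e1 : r N = Q := by
      ext i; simp only [r]; rw [div_self hN'.ne', one_mul, te]; simp
    rw [e0, e1]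
  have : ∑ k ∈ Finset.range N, (g (r k) - g (r (k+1))) < ∑ k ∈ Finset.range N, δ / N :=
    Finset.sum_lt_sum_of_nonempty (by simpa using hN.ne') fun k _ => hstep k
  rw [hsum] at this
  simp at this
  rw [mul_div_cancel₀ _ hN'.ne'] at this
  linarith

lemma pnorm_lt (d : ℕ) (hd : 2 ≤ d) (ξ : Cyl d) (h1 : ‖ξ.1‖ ≤ 1 / (2 * d)) (h2 : |ξ.2| ≤ 1/2) :
    pnorm d ξ < 1 := by
  unfold pnorm
  rw [Real.sqrt_lt' one_pos]
  have hd' : (2:ℝ) ≤ d := by exact_mod_cast hd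
  have : ∑ i, ‖ξ.1 i‖ ^ 2 ≤ ∑ i : Fin (d-1), (1 / (2 * (d:ℝ)))^2 := by
    gcongr with i
    exact (norm_le_pi_norm ξ.1 i).trans h1
  simp at this
  have h4 : ((d - 1 : ℕ) : ℝ) ≤ d := by exact_mod_cast Nat.sub_le d 1
  have h5 : ((d - 1 : ℕ) : ℝ) * ((d:ℝ)⁻¹ * 2⁻¹)^2 ≤ 1/4 := by
    calc ((d - 1 : ℕ) : ℝ) * ((d:ℝ)⁻¹ * 2⁻¹)^2 ≤ d * ((d:ℝ)⁻¹ * 2⁻¹)^2 := by gcongr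
      _ = (d:ℝ)⁻¹ * (1/4) := by field_simp; norm_num
      _ ≤ 1 * (1/4) := by gcongr; exact inv_le_one_of_one_le₀ (by linarith)
      _ = 1/4 := by norm_num
  have h6 : ξ.2^2 ≤ 1/4 := by rw [← sq_abs]; nlinarith [abs_nonneg ξ.2]
  nlinarith

lemma G0_gain (d : ℕ) (hd : 2 ≤ d) (L δ : ℝ) (hL : 0 < L) (hδ : 0 < δ) :
    ∃ C : ℝ, 0 < C ∧
      ∀ g : Torus d → ℝ, LipschitzWith (Real.toNNReal L) g → δ ≤ osc d g →
        ∀ ε : ℝ, 0 < ε → ε ≤ 1/2 →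
          G0 d (subgraph d (fun x => (1 - ε) * g x)) (subgraph d (fun x => (1 - ε) * g x))ᶜ
            + ENNReal.ofReal (C * ε)
            ≤ G0 d (subgraph d g) (subgraph d g)ᶜ := by
  have hd' : (2:ℝ) ≤ d := by exact_mod_cast hd
  set c0 : ℝ := δ / (8 * d) with hc0
  have c0pos : 0 < c0 := by positivity
  obtain ⟨η, ηpos, η1, η2, η3⟩ : ∃ η : ℝ, 0 < η ∧ η ≤ 1 / (4 * d) ∧ η ≤ c0 / 2 ∧ 3 * L * η ≤ c0 := by
    refine ⟨min (1 / (4 * d)) (min (c0 / 2) (c0 / (3 * L))), by positivity, min_le_left _ _, 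
      (min_le_right _ _).trans (min_le_left _ _), ?_⟩
    have : min (1 / (4 * (d:ℝ))) (min (c0 / 2) (c0 / (3 * L))) ≤ c0 / (3 * L) := 
      (min_le_right _ _).trans (min_le_right _ _)
    rw [le_div_iff₀ (by positivity)] at this
    linarith
  set m : ℝ := (volume (Metric.ball (0 : Torus d) η)).toReal with hm
  have mfin : volume (Metric.ball (0 : Torus d) η) ≠ ⊤ := measure_ne_top _ _
  have mpos : 0 < m := ENNReal.toReal_pos (Metric.measure_ball_pos _ _ ηpos).ne' mfin
  have mball : ∀ p : Torus d, volume (Metric.ball p η) = ENNReal.ofReal m := by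
    intro p
    rw [hm, ENNReal.ofReal_toReal mfin]
    exact Measure.addHaar_ball_center _ p η
  refine ⟨c0 * m * m * η, by positivity, ?_⟩
  intro g hgL hosc ε hε hε1
  have hg := hgL.continuous
  have hg' : Continuous (fun x => (1 - ε) * g x) := by fun_prop
  obtain ⟨p, q, hpq, hgpq⟩ := chain d g hg δ hosc (4 * d) (by omega)
  push_cast at hpq hgpq
  have hLip : ∀ x y, |g x - g y| ≤ L * ‖x - y‖ := by
    intro x y
    have := hgL.dist_le_mul x y
    rwa [Real.coe_toNNReal _ hL.le, Real.dist_eq, dist_eq_norm] at this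
  have hgap : ∀ x ξ : Torus d, x ∈ Metric.ball p η → ξ ∈ Metric.ball (p - q) η → c0 ≤ g x - g (x - ξ) := by
    intro x ξ hx hξ
    rw [mem_ball_iff_norm] at hx hξ
    have e1 := (abs_le.1 (hLip x p)).1
    have e2 := (abs_le.1 (hLip (x - ξ) q)).2
    have e3 : ‖x - ξ - q‖ ≤ 2 * η := by
      have : x - ξ - q = (x - p) - (ξ - (p - q)) := by abel
      rw [this]
      refine (norm_sub_le _ _).trans (by linarith)
    have e4 : L * ‖x - p‖ ≤ L * η := by gcongr
    have e5 : L * ‖x - ξ - q‖ ≤ L * (2 * η) := by gcongr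
    have e6 : δ / (4 * d) = 2 * c0 := by rw [hc0]; field_simp; norm_num
    linarith
  have hscale : ∀ x ξ : Torus d, (1 - ε) * g x - (1 - ε) * g (x - ξ) = (1 - ε) * (g x - g (x - ξ)) := by
    intros; ring
  -- main inequality
  suffices hmain : 4 * G0 d (subgraph d (fun x => (1 - ε) * g x)) (subgraph d (fun x => (1 - ε) * g x))ᶜ
            + 4 * ENNReal.ofReal (c0 * m * m * η * ε)
            ≤ 4 * G0 d (subgraph d g) (subgraph d g)ᶜ by
    rw [← mul_add] at hmain
    exact (ENNReal.mul_le_mul_iff_right (by norm_num) (by norm_num)).1 hmain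
  rw [four_G0 d _ hg', four_G0 d g hg]
  set U : Set (Cyl d) := Metric.ball (p - q) η ×ˢ Metric.ball (0:ℝ) η with hU
  have hUm : MeasurableSet U := measurableSet_ball.prod measurableSet_ball
  set A : ℝ≥0∞ := ENNReal.ofReal (2 * ε * c0) * ENNReal.ofReal m with hA
  have hvol : 4 * ENNReal.ofReal (c0 * m * m * η * ε) = ∫⁻ ξ : Cyl d, U.indicator (fun _ => A) ξ := by
    rw [lintegral_indicator_const hUm, hU, Measure.volume_eq_prod, Measure.prod_prod, mball,
      Real.volume_ball, hA, ← ENNReal.ofReal_mul (by positivity), ← ENNReal.ofReal_mul (by positivity),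
      ← ENNReal.ofReal_mul (by positivity),
      show (4:ℝ≥0∞) = ENNReal.ofReal 4 by norm_num, ← ENNReal.ofReal_mul (by positivity)]
    congr 1; ring
  rw [hvol]
  refine (le_lintegral_add _ _).trans (lintegral_mono fun ξ => ?_)
  simp only [hscale]
  by_cases hξ : ξ ∈ U
  · rw [indicator_of_mem hξ]
    obtain ⟨hξ1, hξ2⟩ := hξ
    have hK : 1 ≤ KK d ξ := by
      apply KK_ge
      apply pnorm_lt d hd
      · rw [mem_ball_iff_norm] at hξ1
        have : ‖ξ.1‖ ≤ ‖ξ.1 - (p - q)‖ + ‖p - q‖ := by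
          simpa using norm_add_le (ξ.1 - (p - q)) (p - q)
        have e : 1 / (2 * (d:ℝ)) = 1 / (4 * d) + 1 / (4 * d) := by field_simp; norm_num
        linarith
      · rw [mem_ball_zero_iff, Real.norm_eq_abs] at hξ2
        have : 1 / (4 * (d:ℝ)) ≤ 1 / (4 * 2) := by gcongr
        linarith
    calc _ ≤ KK d ξ * (∫⁻ x : Torus d, ENNReal.ofReal (phi ((1 - ε) * (g x - g (x - ξ.1))) ξ.2)) + KK d ξ * A := by
          gcongr
          exact le_mul_of_one_le_left zero_le hK
      _ = KK d ξ * ((∫⁻ x : Torus d, ENNReal.ofReal (phi ((1 - ε) * (g x - g (x - ξ.1))) ξ.2)) + A) := by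
          rw [mul_add]
      _ ≤ _ := by
          gcongr
          have : A = ∫⁻ x : Torus d, (Metric.ball p η).indicator (fun _ => ENNReal.ofReal (2 * ε * c0)) x := by
            rw [lintegral_indicator_const measurableSet_ball, mball]
          rw [this]
          refine (le_lintegral_add _ _).trans (lintegral_mono fun x => ?_)
          by_cases hx : x ∈ Metric.ball p η
          · simp only [indicator_of_mem hx]
            rw [← ENNReal.ofReal_add (by unfold phi; positivity) (by positivity)]
            apply ENNReal.ofReal_le_ofReal
            have := phi_strict (g x - g (x - ξ.1)) ξ.2 (1 - ε) c0 (by linarith) (by linarith)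
              (hgap x ξ.1 hx hξ1) c0pos.le (by
                rw [mem_ball_zero_iff, Real.norm_eq_abs] at hξ2; linarith)
            convert this using 2; ring
          · simp only [indicator_of_notMem hx, add_zero]
            exact ENNReal.ofReal_le_ofReal (phi_mono _ _ _ (by linarith) (by linarith))
  · rw [indicator_of_notMem hξ, add_zero]
    gcongr
    exact phi_mono _ _ _ (by linarith) (by linarith)

lemma bddTop (d : ℕ) (g : Torus d → ℝ) (hg : Continuous g) : BddTop d (subgraph d g) := by
  obtain ⟨M, hM⟩ := (isCompact_range hg).bddAbove
  refine ⟨M + 1, fun x hx => ?_⟩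
  have h1 : x.2 ≤ g x.1 := hx
  have h2 : g x.1 ≤ M := hM (mem_range_self _)
  show x.2 < M + 1
  linarith

lemma rho_eq (d : ℕ) (g : Torus d → ℝ) (hg : Continuous g) : rhoSup d (subgraph d g) = ⨆ x, g x := by
  have hb := (isCompact_range hg).bddAbove
  have : {ρ : ℝ | subgraph d g ⊆ {x : Cyl d | x.2 < ρ}} = Ioi (⨆ x, g x) := by
    ext ρ
    obtain ⟨P, hP⟩ := (isCompact_univ (X := Torus d)).exists_isMaxOn univ_nonempty hg.continuousOn
    constructor
    · intro h
      have h1 : g P < ρ := h (show ((P, g P) : Cyl d) ∈ subgraph d g from le_refl (g P))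
      exact lt_of_le_of_lt (ciSup_le fun x => hP.2 (mem_univ x)) h1
    · intro h x hx
      exact lt_of_le_of_lt (le_trans hx (le_ciSup hb x.1)) h
  rw [rhoSup, this, csInf_Ioi]

lemma J0_trans (d : ℕ) (τ : ℝ) (E F : Set (Cyl d)) (hE : MeasurableSet E) (hF : MeasurableSet F) :
    J0 d ((fun x : Cyl d => x + (0, τ)) ⁻¹' E) ((fun x : Cyl d => x + (0, τ)) ⁻¹' F) = J0 d E F := by
  have mp : Measurable (fun x : Cyl d => x + (0, τ)) := measurable_id.add_const _
  unfold J0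
  rw [← lintegral_indicator hE, ← lintegral_indicator (mp hE)]
  conv_rhs => rw [← lintegral_add_right_eq_self _ ((0, τ) : Cyl d)]
  apply lintegral_congr
  intro x
  by_cases hx : x + (0, τ) ∈ E
  · rw [indicator_of_mem hx, indicator_of_mem (show x ∈ (fun x : Cyl d => x + (0, τ)) ⁻¹' E from hx)]
    rw [← lintegral_indicator hF, ← lintegral_indicator (mp hF)]
    conv_rhs => rw [← lintegral_add_right_eq_self _ ((0, τ) : Cyl d)]
    apply lintegral_congr
    intro y
    by_cases hy : y + (0, τ) ∈ F
    · rw [indicator_of_mem hy, indicator_of_mem (show y ∈ (fun x : Cyl d => x + (0, τ)) ⁻¹' F from hy)]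
      simp only [add_sub_add_right_eq_sub]
    · rw [indicator_of_notMem hy, indicator_of_notMem (show y ∉ (fun x : Cyl d => x + (0, τ)) ⁻¹' F from hy)]
  · rw [indicator_of_notMem hx, indicator_of_notMem (show x ∉ (fun x : Cyl d => x + (0, τ)) ⁻¹' E from hx)]

lemma J0_mono (d : ℕ) (E F : Set (Cyl d)) (h : E ⊆ F) : J0 d E E ≤ J0 d F F := by
  unfold J0
  refine (lintegral_mono_set h).trans (lintegral_mono fun x => ?_)
  exact lintegral_mono_set h

lemma slab_meas (d : ℕ) (a b : ℝ) : MeasurableSet (slab2 d a b) :=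
  measurable_snd measurableSet_Ioo

lemma Q0_le (d : ℕ) (g : Torus d → ℝ) (hg : Continuous g) (ε : ℝ) (hε : 0 < ε) (hε1 : ε ≤ 1/2) (R : ℝ) :
    Q0 d (-R) ((1 - ε) * ⨆ x, g x) (subgraph d (fun x => (1 - ε) * g x))
     ≤ Q0 d (-(R - ε * ⨆ x, g x)) (⨆ x, g x) (subgraph d g) := by
  set M := ⨆ x, g x with hM
  have hb := (isCompact_range hg).bddAbove
  have hs : slab2 d (-R) ((1 - ε) * M) = (fun x : Cyl d => x + (0, ε * M)) ⁻¹' slab2 d (-(R - ε * M)) M := by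
    ext x
    simp only [slab2, mem_ofPred_eq, mem_preimage, Prod.snd_add]
    constructor <;> rintro ⟨h1, h2⟩ <;> constructor <;> linarith
  unfold Q0
  rw [hs, J0_trans d _ _ _ (slab_meas d _ _) (slab_meas d _ _)]
  apply tsub_le_tsub_left
  have hm : MeasurableSet (subgraph d g ∩ slab2 d (-(R - ε * M)) M) := (sub_meas d g hg).inter (slab_meas d _ _)
  rw [← J0_trans d (ε * M) _ _ hm hm]
  apply J0_mono
  rintro x ⟨h1, h2⟩
  refine ⟨?_, h2⟩
  have h3 : x.2 + ε * M ≤ g (x.1 + 0) := h1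
  rw [add_zero] at h3
  have h4 : g x.1 ≤ M := le_ciSup hb x.1
  show x.2 ≤ (1 - ε) * g x.1
  nlinarith

lemma limsup_shift (f : ℝ → ℝ≥0∞) (a : ℝ) : limsup (fun R => f (R - a)) atTop = limsup f atTop := by
  have : map (fun R : ℝ => R - a) atTop = atTop := by
    have := (OrderIso.addRight (-a)).map_atTop
    simp only [sub_eq_add_neg]; exact this
  conv_rhs => rw [← this]
  rfl

lemma P0_eq (d : ℕ) (g : Torus d → ℝ) (hg : Continuous g) : P0 d (subgraph d g) =
    G0 d (subgraph d g) (subgraph d g)ᶜ + limsup (fun R : ℝ => Q0 d (-R) (⨆ x, g x) (subgraph d g)) atTop := by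
  have hne : subgraph d g ≠ ∅ := by
    apply Set.Nonempty.ne_empty
    exact ⟨(0, g 0), le_refl (g 0)⟩
  rw [P0, if_neg hne, if_pos (bddTop d g hg), rho_eq d g hg]

/-- The 0-fractional perimeter satisfies assumption (H). -/
theorem P0_assumptionH (d : ℕ) (hd : 2 ≤ d) (L δ : ℝ) (hL : 0 < L) (hδ : 0 < δ) :
    ∃ ε₀ ∈ Set.Ioo (0:ℝ) 1, ∃ C : ℝ, 0 < C ∧
      ∀ g : Torus d → ℝ, LipschitzWith (Real.toNNReal L) g → δ ≤ osc d g →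
        ∀ ε : ℝ, 0 < ε → ε ≤ ε₀ →
          P0 d (subgraph d (fun x => (1 - ε) * g x)) + ENNReal.ofReal (C * ε)
            ≤ P0 d (subgraph d g) := by
  
  obtain ⟨C, hC, h⟩ := G0_gain d hd L δ hL hδ
  refine ⟨1/2, by norm_num, C, hC, ?_⟩
  intro g hgL hosc ε hε hε1
  have hg := hgL.continuous
  have hg' : Continuous (fun x => (1 - ε) * g x) := by fun_prop
  rw [P0_eq d g hg, P0_eq d _ hg', add_right_comm]
  refine add_le_add (h g hgL hosc ε hε hε1) ?_
  rw [← Real.mul_iSup_of_nonneg (by linarith), 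
    ← limsup_shift (fun R : ℝ => Q0 d (-R) (⨆ x, g x) (subgraph d g)) (ε * ⨆ x, g x)]
  exact limsup_le_limsup (Eventually.of_forall fun R => Q0_le d g hg ε hε hε1 R)
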